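/- Let E be a measurable space, let μ_1, …, μ_n be probability measures on E such that for each j, μ_{j+1} has density ḡ_j with respect to μ_j and 0 ≤ ḡ_j ≤ γ μ_j-a.e., where γ ≥ 1. For k = 2, …, n let T_k be maps on bounded measurable functions satisfying, for all bounded measurable f: ∫ T_k f dμ_{k−1} = ∫ f dμ_k and ∫ (T_k f)² dμ_{k−1} ≤ α ∫ f² dμ_k + β (∫ f dμ_k)², with 0 < α < 1 and β ≥ 1; set q̂_{j,k} = T_{j+1} ∘ ⋯ ∘ T_k (and q̂_{k,k} = id). For each k let P_k map bounded measurable functions to bounded measurable functions with ∫ (P_k f)² dμ_k ≤ ∫ f² dμ_k for all f. Define q_{j,k} f := ḡ_j · q̂_{j+1,k}(P_k f) for j < k and q_{k,k} f := f. Then for every k ≤ n and every bounded measurable f with ∫ f² dμ_k ≤ 1: Σ_{j=1}^{k} Var_{μ_j}(q_{j,k} f) ≤ k · γ · β/(1−α). -/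

import Mathlib

open MeasureTheory

/-- A bounded measurable real-valued function. -/
def IsBddMeasurable {E : Type*} [MeasurableSpace E] (f : E → ℝ) : Prop :=
  Measurable f ∧ ∃ C : ℝ, ∀ x, |f x| ≤ C

/-- `qhat T j k = T (j+1) ∘ ⋯ ∘ T k` (the identity when `k ≤ j`). -/
def qhat {E : Type*} (T : ℕ → (E → ℝ) → (E → ℝ)) (j : ℕ) : ℕ → (E → ℝ) → (E → ℝ)
  | 0, f => f
  | k + 1, f => if j < k + 1 then qhat T j k (T (k + 1) f) else f

/-- The variance `∫ g² dμ − (∫ g dμ)²`. -/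
noncomputable def varI {E : Type*} [MeasurableSpace E] (μ : Measure E) (g : E → ℝ) : ℝ :=
  ∫ x, (g x) ^ 2 ∂μ - (∫ x, g x ∂μ) ^ 2

/-!
Each summand is at most `γ * (β / (1 - α))`. The variance is at most the second moment, and one of
the two factors `ḡ_j` of `(ḡ_j * h) ^ 2` is bounded by `γ` while the other turns `μ_j` into
`μ_{j+1}`; so it suffices to bound the second moment of `h = q̂_{j+1,k} (P_k f)` uniformly in `j`.
With `B = β / (1 - α)`, the fixed point of `b ↦ α * b + β`, the two assumptions on `T_k` say that it
preserves the mean and contracts `∫ f ^ 2 - B * (∫ f) ^ 2` by the factor `α`. Iterating,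
`∫ (q̂_{j,k} f) ^ 2 ≤ α ^ (k - j) * ∫ f ^ 2 + (1 - α ^ (k - j)) * B * (∫ f) ^ 2`,
and the right-hand side is at most `B * ∫ f ^ 2` by Jensen's inequality.
-/

section Moments

variable {E : Type*} [MeasurableSpace E] {ν ν' : Measure E}

theorem IsBddMeasurable.memLp {f : E → ℝ} (hf : IsBddMeasurable f) [IsFiniteMeasure ν]
    (p : ENNReal) : MemLp f p ν :=
  let ⟨hmeas, C, hC⟩ := hf
  MemLp.of_bound hmeas.aestronglyMeasurable C (.of_forall hC)

theorem varI_le_integral_sq (ν : Measure E) (f : E → ℝ) : varI ν f ≤ ∫ x, f x ^ 2 ∂ν :=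
  sub_le_self _ (sq_nonneg _)

theorem sq_integral_le_integral_sq [IsProbabilityMeasure ν] {f : E → ℝ} (hf : MemLp f 2 ν) :
    (∫ x, f x ∂ν) ^ 2 ≤ ∫ x, f x ^ 2 ∂ν :=
  sub_nonneg.mp <| (ProbabilityTheory.variance_eq_sub hf).symm ▸
    ProbabilityTheory.variance_nonneg f ν

theorem integral_mul_sq_le_of_density_le {g h : E → ℝ} {γ : ℝ} (hg : AEMeasurable g ν)
    (hν' : ν' = ν.withDensity fun x => ENNReal.ofReal (g x))
    (hgγ : ∀ᵐ x ∂ν, 0 ≤ g x ∧ g x ≤ γ) (hh : Integrable (fun x => h x ^ 2) ν') :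
    ∫ x, (g x * h x) ^ 2 ∂ν ≤ γ * ∫ x, h x ^ 2 ∂ν' := by
  have hlt : ∀ᵐ x ∂ν, ENNReal.ofReal (g x) < ⊤ := .of_forall fun _ => ENNReal.ofReal_lt_top
  rw [hν', integrable_withDensity_iff_integrable_smul₀' hg.ennreal_ofReal hlt] at hh
  rw [hν', integral_withDensity_eq_integral_toReal_smul₀ hg.ennreal_ofReal hlt,
    ← integral_const_mul]
  refine integral_mono_of_nonneg (.of_forall fun _ => sq_nonneg _) (hh.const_mul γ) ?_
  filter_upwards [hgγ] with x ⟨hg0, hgx⟩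
  calc (g x * h x) ^ 2 = g x * (g x * h x ^ 2) := by ring
    _ ≤ γ * (g x * h x ^ 2) := by gcongr
    _ = γ * ((ENNReal.ofReal (g x)).toReal • h x ^ 2) := by
      rw [ENNReal.toReal_ofReal hg0, smul_eq_mul]

end Moments

section Drift

variable {E : Type*} [MeasurableSpace E]

/-- The standing assumption on the maps `T_k`, for a single map `T` from functions under `ν'` to
functions under `ν`: it preserves bounded measurability and the mean, and it satisfies a drift
inequality for the second moment with rate `α` and constant `β`. -/
structure SecondMomentDrift (α β : ℝ) (ν ν' : Measure E) (T : (E → ℝ) → (E → ℝ)) : Prop where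
  isBddMeasurable : ∀ f, IsBddMeasurable f → IsBddMeasurable (T f)
  integral_eq : ∀ f, IsBddMeasurable f → ∫ x, T f x ∂ν = ∫ x, f x ∂ν'
  integral_sq_le : ∀ f, IsBddMeasurable f →
    ∫ x, T f x ^ 2 ∂ν ≤ α * ∫ x, f x ^ 2 ∂ν' + β * (∫ x, f x ∂ν') ^ 2

/-- The excess of the second moment of `f` over `b` times its squared mean, the Lyapunov function
of the iteration of the `T_k`. For `b = 1` it is the variance. -/
noncomputable def secondMomentExcess (b : ℝ) (ν : Measure E) (f : E → ℝ) : ℝ :=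
  ∫ x, f x ^ 2 ∂ν - b * (∫ x, f x ∂ν) ^ 2

theorem SecondMomentDrift.secondMomentExcess_le {α β : ℝ} {ν ν' : Measure E}
    {T : (E → ℝ) → (E → ℝ)} (hT : SecondMomentDrift α β ν ν' T) (hα1 : α ≠ 1) {f : E → ℝ}
    (hf : IsBddMeasurable f) :
    secondMomentExcess (β / (1 - α)) ν (T f) ≤ α * secondMomentExcess (β / (1 - α)) ν' f := by
  have fixedPoint : β / (1 - α) = α * (β / (1 - α)) + β := by
    have : 1 - α ≠ 0 := sub_ne_zero.mpr hα1.symm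
    field_simp
    ring
  unfold secondMomentExcess
  rw [hT.integral_eq f hf]
  linear_combination hT.integral_sq_le f hf - (∫ x, f x ∂ν') ^ 2 * fixedPoint

end Drift

section Qhat

variable {E : Type*} {T : ℕ → (E → ℝ) → (E → ℝ)} {j m : ℕ}

theorem qhat_self (T : ℕ → (E → ℝ) → (E → ℝ)) (j : ℕ) (f : E → ℝ) : qhat T j j f = f := by
  cases j <;> simp [qhat]

theorem qhat_succ (hjm : j ≤ m) (f : E → ℝ) : qhat T j (m + 1) f = qhat T j m (T (m + 1) f) :=
  if_pos (Nat.lt_succ_of_le hjm)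

variable [MeasurableSpace E] {μ : ℕ → Measure E} {α β : ℝ} {f : E → ℝ}

theorem IsBddMeasurable.qhat (hf : IsBddMeasurable f) (hjm : j ≤ m)
    (hT : ∀ i, j ≤ i → i < m → ∀ f, IsBddMeasurable f → IsBddMeasurable (T (i + 1) f)) :
    IsBddMeasurable (qhat T j m f) := by
  induction m, hjm using Nat.le_induction generalizing f with
  | base => rwa [qhat_self]
  | succ m hjm ih =>
    rw [qhat_succ hjm]
    exact ih (hT m hjm m.lt_succ_self f hf) fun i hji him => hT i hji (him.trans m.lt_succ_self)

theorem integral_qhat (hjm : j ≤ m)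
    (hT : ∀ i, j ≤ i → i < m → SecondMomentDrift α β (μ i) (μ (i + 1)) (T (i + 1)))
    (hf : IsBddMeasurable f) : ∫ x, qhat T j m f x ∂(μ j) = ∫ x, f x ∂(μ m) := by
  induction m, hjm using Nat.le_induction generalizing f with
  | base => rw [qhat_self]
  | succ m hjm ih =>
    have hlast := hT m hjm m.lt_succ_self
    rw [qhat_succ hjm, ih (fun i hji him => hT i hji (him.trans m.lt_succ_self))
      (hlast.isBddMeasurable f hf), hlast.integral_eq f hf]

theorem secondMomentExcess_qhat_le (hα0 : 0 ≤ α) (hα1 : α ≠ 1) (hjm : j ≤ m)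
    (hT : ∀ i, j ≤ i → i < m → SecondMomentDrift α β (μ i) (μ (i + 1)) (T (i + 1)))
    (hf : IsBddMeasurable f) :
    secondMomentExcess (β / (1 - α)) (μ j) (qhat T j m f) ≤
      α ^ (m - j) * secondMomentExcess (β / (1 - α)) (μ m) f := by
  induction m, hjm using Nat.le_induction generalizing f with
  | base => simp [qhat_self]
  | succ m hjm ih =>
    have hlast := hT m hjm m.lt_succ_self
    rw [qhat_succ hjm, Nat.succ_sub hjm, pow_succ, mul_assoc]
    calc secondMomentExcess (β / (1 - α)) (μ j) (qhat T j m (T (m + 1) f))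
        ≤ α ^ (m - j) * secondMomentExcess (β / (1 - α)) (μ m) (T (m + 1) f) :=
          ih (fun i hji him => hT i hji (him.trans m.lt_succ_self)) (hlast.isBddMeasurable f hf)
      _ ≤ α ^ (m - j) * (α * secondMomentExcess (β / (1 - α)) (μ (m + 1)) f) := by
        gcongr
        exact hlast.secondMomentExcess_le hα1 hf

theorem integral_sq_qhat_le (hα0 : 0 ≤ α) (hα1 : α ≠ 1) (hjm : j ≤ m)
    (hT : ∀ i, j ≤ i → i < m → SecondMomentDrift α β (μ i) (μ (i + 1)) (T (i + 1)))
    (hf : IsBddMeasurable f) :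
    ∫ x, qhat T j m f x ^ 2 ∂(μ j) ≤
      α ^ (m - j) * ∫ x, f x ^ 2 ∂(μ m) +
        (1 - α ^ (m - j)) * (β / (1 - α)) * (∫ x, f x ∂(μ m)) ^ 2 := by
  have hexcess := secondMomentExcess_qhat_le hα0 hα1 hjm hT hf
  unfold secondMomentExcess at hexcess
  rw [integral_qhat hjm hT hf] at hexcess
  linear_combination hexcess

theorem integral_sq_qhat_le_mul_integral_sq [IsProbabilityMeasure (μ m)]
    (hα0 : 0 ≤ α) (hα1 : α < 1) (hαβ : 1 ≤ α + β) (hjm : j ≤ m)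
    (hT : ∀ i, j ≤ i → i < m → SecondMomentDrift α β (μ i) (μ (i + 1)) (T (i + 1)))
    (hf : IsBddMeasurable f) :
    ∫ x, qhat T j m f x ^ 2 ∂(μ j) ≤ β / (1 - α) * ∫ x, f x ^ 2 ∂(μ m) := by
  have one_le_B : 1 ≤ β / (1 - α) := (one_le_div (by linarith)).mpr (by linarith)
  have weight_nonneg : 0 ≤ 1 - α ^ (m - j) := sub_nonneg.mpr (pow_le_one₀ hα0 hα1.le)
  have second_moment_nonneg : 0 ≤ ∫ x, f x ^ 2 ∂(μ m) := integral_nonneg fun _ => sq_nonneg _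
  calc ∫ x, qhat T j m f x ^ 2 ∂(μ j)
      ≤ α ^ (m - j) * ∫ x, f x ^ 2 ∂(μ m) +
          (1 - α ^ (m - j)) * (β / (1 - α)) * (∫ x, f x ∂(μ m)) ^ 2 :=
        integral_sq_qhat_le hα0 hα1.ne hjm hT hf
    _ ≤ α ^ (m - j) * (β / (1 - α) * ∫ x, f x ^ 2 ∂(μ m)) +
          (1 - α ^ (m - j)) * (β / (1 - α)) * ∫ x, f x ^ 2 ∂(μ m) := by
        gcongr
        · exact le_mul_of_one_le_left second_moment_nonneg one_le_B
        · exact sq_integral_le_integral_sq (hf.memLp 2)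
    _ = β / (1 - α) * ∫ x, f x ^ 2 ∂(μ m) := by ring

theorem integral_sq_density_mul_qhat_le [IsFiniteMeasure (μ (j + 1))] [IsProbabilityMeasure (μ m)]
    {g : E → ℝ} {γ : ℝ} (hγ0 : 0 ≤ γ) (hg : AEMeasurable g (μ j))
    (hden : μ (j + 1) = (μ j).withDensity fun x => ENNReal.ofReal (g x))
    (hgγ : ∀ᵐ x ∂(μ j), 0 ≤ g x ∧ g x ≤ γ)
    (hα0 : 0 ≤ α) (hα1 : α < 1) (hαβ : 1 ≤ α + β) (hjm : j < m)
    (hT : ∀ i, j < i → i < m → SecondMomentDrift α β (μ i) (μ (i + 1)) (T (i + 1)))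
    (hf : IsBddMeasurable f) :
    ∫ x, (g x * qhat T (j + 1) m f x) ^ 2 ∂(μ j) ≤ γ * (β / (1 - α) * ∫ x, f x ^ 2 ∂(μ m)) := by
  have hq := hf.qhat hjm fun i hji him => (hT i hji him).isBddMeasurable
  calc ∫ x, (g x * qhat T (j + 1) m f x) ^ 2 ∂(μ j)
      ≤ γ * ∫ x, qhat T (j + 1) m f x ^ 2 ∂(μ (j + 1)) :=
        integral_mul_sq_le_of_density_le hg hden hgγ (hq.memLp 2).integrable_sq
    _ ≤ γ * (β / (1 - α) * ∫ x, f x ^ 2 ∂(μ m)) := by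
      gcongr
      exact integral_sq_qhat_le_mul_integral_sq hα0 hα1 hαβ hjm hT hf

end Qhat

theorem stmt_3 {E : Type*} [MeasurableSpace E] (n : ℕ)
    (μ : ℕ → Measure E) (hprob : ∀ k, 1 ≤ k → k ≤ n → IsProbabilityMeasure (μ k))
    (γ : ℝ) (hγ : 1 ≤ γ)
    (g : ℕ → E → ℝ) (hgmeas : ∀ j, Measurable (g j))
    (hden : ∀ j, 1 ≤ j → j < n →
      μ (j + 1) = (μ j).withDensity fun x => ENNReal.ofReal (g j x))
    (hgbd : ∀ j, 1 ≤ j → j < n → ∀ᵐ x ∂(μ j), 0 ≤ g j x ∧ g j x ≤ γ)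
    (T : ℕ → (E → ℝ) → (E → ℝ)) (α β : ℝ)
    (hα0 : 0 < α) (hα1 : α < 1) (hβ : 1 ≤ β)
    (hTbdd : ∀ k, 2 ≤ k → k ≤ n → ∀ f, IsBddMeasurable f → IsBddMeasurable (T k f))
    (hmean : ∀ k, 2 ≤ k → k ≤ n → ∀ f, IsBddMeasurable f →
      ∫ x, T k f x ∂(μ (k - 1)) = ∫ x, f x ∂(μ k))
    (hstep : ∀ k, 2 ≤ k → k ≤ n → ∀ f, IsBddMeasurable f →
      ∫ x, (T k f x) ^ 2 ∂(μ (k - 1)) ≤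
        α * ∫ x, (f x) ^ 2 ∂(μ k) + β * (∫ x, f x ∂(μ k)) ^ 2)
    (P : ℕ → (E → ℝ) → (E → ℝ))
    (hPbdd : ∀ k, 1 ≤ k → k ≤ n → ∀ f, IsBddMeasurable f → IsBddMeasurable (P k f))
    (hPcontr : ∀ k, 1 ≤ k → k ≤ n → ∀ f, IsBddMeasurable f →
      ∫ x, (P k f x) ^ 2 ∂(μ k) ≤ ∫ x, (f x) ^ 2 ∂(μ k)) :
    ∀ k, 1 ≤ k → k ≤ n → ∀ f, IsBddMeasurable f → ∫ x, (f x) ^ 2 ∂(μ k) ≤ 1 →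
      ∑ j ∈ Finset.Icc 1 k, varI (μ j)
          (if j < k then fun x => g j x * qhat T (j + 1) k (P k f) x else f)
        ≤ (k : ℝ) * γ * (β / (1 - α)) := by
  intro k hk hkn f hf hf1
  have one_le_B : 1 ≤ β / (1 - α) := (one_le_div (by linarith)).mpr (by linarith)
  refine (Finset.sum_le_card_nsmul _ _ (γ * (β / (1 - α))) fun j hj => ?_).trans_eq
    (by simp [mul_assoc])
  obtain ⟨hj1, hjk⟩ := Finset.mem_Icc.mp hj
  refine (varI_le_integral_sq _ _).trans ?_
  obtain rfl | hjk := hjk.eq_or_lt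
  · simpa only [lt_irrefl, if_false] using hf1.trans (one_le_mul_of_one_le_of_one_le hγ one_le_B)
  have := hprob k hk hkn
  have := hprob (j + 1) (by omega) (by omega)
  have hT : ∀ i, j < i → i < k → SecondMomentDrift α β (μ i) (μ (i + 1)) (T (i + 1)) :=
    fun i _ _ => ⟨hTbdd _ (by omega) (by omega), hmean (i + 1) (by omega) (by omega),
      hstep (i + 1) (by omega) (by omega)⟩
  simp only [if_pos hjk]
  calc ∫ x, (g j x * qhat T (j + 1) k (P k f) x) ^ 2 ∂(μ j)
      ≤ γ * (β / (1 - α) * ∫ x, P k f x ^ 2 ∂(μ k)) :=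
        integral_sq_density_mul_qhat_le (by linarith) (hgmeas j).aemeasurable
          (hden j hj1 (by omega)) (hgbd j hj1 (by omega)) hα0.le hα1 (by linarith) hjk hT
          (hPbdd k hk hkn f hf)
    _ ≤ γ * (β / (1 - α)) := by
      gcongr
      exact mul_le_of_le_one_right (by linarith) ((hPcontr k hk hkn f hf).trans hf1)
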